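/- arXiv:2109.14497 — 2 statements merged into one kernel-verified Lean document; each statement's English description precedes it below -/
import Mathlib

section
/- (Observation 1) For every 1 ≤ i ≤ n, the wrapping length y_i equals x_i − x_h, where h is the largest index with 0 ≤ h < i and x_h + y_h ≤ x_i; equivalently, y_i = x_i − max{ x_h : 0 ≤ h < i, x_h + y_h ≤ x_i }. -/
/-- `pSum L i` is `x_i`: the sum of the first `i` elements of `L` (so `pSum L 0 = 0`). -/
def pSum (L : List ℝ) (i : ℕ) : ℝ := (L.take i).sum

/-- A valid partition of `L`: a partition of `L` into nonempty consecutive blocks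
whose totals are non-decreasing from left to right. -/
def ValidPartition (L : List ℝ) (P : List (List ℝ)) : Prop :=
  P.flatten = L ∧ (∀ B ∈ P, B ≠ []) ∧ List.Chain' (· ≤ ·) (P.map List.sum)

/-- The total of the last block of a partition (`0` for the empty partition). -/
def lastTotal (P : List (List ℝ)) : ℝ := (P.map List.sum).getLastD 0

/-- `wrapLen L` is the wrapping length `y_{|L|}`: the minimum, over all valid
partitions of `L`, of the total of the last block (with `wrapLen [] = 0`,
realized by the empty partition). -/
noncomputable def wrapLen (L : List ℝ) : ℝ :=
  sInf {t | ∃ P, ValidPartition L P ∧ lastTotal P = t}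

/-!
Removing the last block from a valid partition of `(l_1, …, l_i)` leaves a valid partition of some
shorter prefix `(l_1, …, l_h)`, and for a given `h` this block can be put back as soon as *some*
valid partition of the shorter prefix has last total at most `x_i - x_h`, that is, as soon as
`y_h ≤ x_i - x_h`. Hence `y_i` is the minimum of `x_i - x_h` over these `h`, and since `x` is
monotone the minimum is attained at the largest of them.
-/

section ValidPartition

variable {L A B : List ℝ} {Q : List (List ℝ)}

theorem exists_validPartition (L : List ℝ) : ∃ P, ValidPartition L P := by
  rcases eq_or_ne L [] with rfl | hL
  · exact ⟨[], rfl, by simp, List.isChain_nil⟩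
  · exact ⟨[L], by simp, by simpa using hL, List.isChain_singleton _⟩

-- A partition into nonempty blocks is determined by the composition formed by the block lengths.
theorem finite_setOf_validPartition (L : List ℝ) : {P | ValidPartition L P}.Finite := by
  refine (Set.finite_range fun c : Composition L.length ↦ L.splitWrtComposition c).subset ?_
  rintro P ⟨rfl, hne, -⟩
  have blocks_pos {k : ℕ} (hk : k ∈ P.map List.length) : 0 < k := by
    obtain ⟨C, hC, rfl⟩ := List.mem_map.1 hk
    exact List.length_pos_iff.2 (hne C hC)
  exact ⟨⟨P.map List.length, blocks_pos, List.length_flatten.symm⟩,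
    List.splitWrtComposition_flatten _ _ rfl⟩

theorem lastTotal_append_singleton (Q : List (List ℝ)) (B : List ℝ) :
    lastTotal (Q ++ [B]) = B.sum := by
  rw [lastTotal, List.map_append, List.map_singleton, List.getLastD_concat]

theorem lastTotal_eq_of_mem_getLast? {x : ℝ} (hx : x ∈ (Q.map List.sum).getLast?) :
    lastTotal Q = x := by
  rw [lastTotal, List.getLastD_eq_getLast?, Option.mem_def.1 hx, Option.getD_some]

theorem ValidPartition.append_singleton (hQ : ValidPartition A Q) (hB : B ≠ [])
    (h : lastTotal Q ≤ B.sum) : ValidPartition (A ++ B) (Q ++ [B]) := by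
  obtain ⟨rfl, hne, hchain⟩ := hQ
  refine ⟨by simp, by simpa [or_imp, forall_and] using ⟨hne, hB⟩, ?_⟩
  rw [List.map_append, List.map_singleton]
  refine hchain.append (List.isChain_singleton _) fun x hx y hy ↦ ?_
  obtain rfl : B.sum = y := by simpa using hy
  exact (lastTotal_eq_of_mem_getLast? hx).symm.trans_le h

theorem ValidPartition.of_append_singleton (h : ValidPartition L (Q ++ [B])) :
    ValidPartition Q.flatten Q :=
  ⟨rfl, fun C hC ↦ h.2.1 C (List.mem_append_left _ hC),
    (List.map_append ▸ h.2.2).left_of_append⟩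

theorem ValidPartition.lastTotal_le_sum (h : ValidPartition L (Q ++ [B])) (hB : 0 ≤ B.sum) :
    lastTotal Q ≤ B.sum := by
  rcases Q.eq_nil_or_concat' with rfl | ⟨R, C, rfl⟩
  · exact hB
  · have hchain := h.2.2
    rw [List.map_append] at hchain
    rw [lastTotal_append_singleton]
    exact (List.isChain_append.1 hchain).2.2 C.sum (by simp) B.sum (by simp)

end ValidPartition

section WrapLen

variable {L A B : List ℝ}

theorem isLeast_wrapLen (L : List ℝ) :
    IsLeast {t | ∃ P, ValidPartition L P ∧ lastTotal P = t} (wrapLen L) := by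
  have hfin := (finite_setOf_validPartition L).image lastTotal
  have hne : (lastTotal '' {P | ValidPartition L P}).Nonempty :=
    Set.Nonempty.image _ (exists_validPartition L)
  exact ⟨hne.csInf_mem hfin, fun _ ht ↦ csInf_le hfin.bddBelow ht⟩

theorem wrapLen_append_le_sum (hB : B ≠ []) (h : wrapLen A ≤ B.sum) :
    wrapLen (A ++ B) ≤ B.sum := by
  obtain ⟨P, hP, hPA⟩ := (isLeast_wrapLen A).1
  exact (isLeast_wrapLen _).2
    ⟨P ++ [B], hP.append_singleton hB (hPA.trans_le h), lastTotal_append_singleton P B⟩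

theorem exists_append_wrapLen_eq_sum (hL : ∀ l ∈ L, 0 ≤ l) (hne : L ≠ []) :
    ∃ A B, A ++ B = L ∧ B ≠ [] ∧ wrapLen A ≤ B.sum ∧ wrapLen L = B.sum := by
  obtain ⟨P, hP, hPL⟩ := (isLeast_wrapLen L).1
  rcases P.eq_nil_or_concat' with rfl | ⟨Q, B, rfl⟩
  · exact absurd hP.1.symm hne
  have happend : Q.flatten ++ B = L := by simpa using hP.1
  have hB : 0 ≤ B.sum :=
    List.sum_nonneg fun b hb ↦ hL b (happend ▸ List.mem_append_right _ hb)
  have hQ : wrapLen Q.flatten ≤ lastTotal Q :=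
    (isLeast_wrapLen _).2 ⟨Q, hP.of_append_singleton, rfl⟩
  exact ⟨Q.flatten, B, happend, hP.2.1 B (by simp), hQ.trans (hP.lastTotal_le_sum hB),
    by rw [← hPL, lastTotal_append_singleton]⟩

end WrapLen

/-- The indices at which the last block of a valid partition of `L.take i` can start: `y_i` is the
minimum of `x_i - x_h` over these `h`. The condition `y_h ≤ x_i - x_h` is written without
subtraction. -/
def cutIndices (L : List ℝ) (i : ℕ) : Set ℕ :=
  {h | h < i ∧ pSum L h + wrapLen (L.take h) ≤ pSum L i}

section CutIndices

variable {L : List ℝ} {h i : ℕ}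

theorem pSum_add_sum_drop_take (L : List ℝ) (hi : h ≤ i) :
    pSum L h + ((L.take i).drop h).sum = pSum L i := by
  rw [pSum, pSum, ← (L.take i).sum_take_add_sum_drop h, List.take_take, min_eq_left hi]

theorem pSum_mono (hL : ∀ l ∈ L, 0 ≤ l) : Monotone (pSum L) := fun h i hi ↦ by
  rw [← pSum_add_sum_drop_take L hi]
  exact le_add_of_nonneg_right <| List.sum_nonneg fun l hl ↦
    hL l (List.mem_of_mem_take (List.mem_of_mem_drop hl))

theorem wrapLen_take_le_sub (hi : i ≤ L.length) (hh : h ∈ cutIndices L i) :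
    wrapLen (L.take i) ≤ pSum L i - pSum L h := by
  obtain ⟨hlt, hle⟩ := hh
  have hsum := pSum_add_sum_drop_take L hlt.le
  have hblock : (L.take i).drop h ≠ [] := by
    rw [Ne, List.drop_eq_nil_iff, List.length_take_of_le hi]
    exact hlt.not_ge
  have happend : L.take h ++ (L.take i).drop h = L.take i := by
    simpa only [List.take_take, min_eq_left hlt.le] using (L.take i).take_append_drop h
  calc wrapLen (L.take i) = wrapLen (L.take h ++ (L.take i).drop h) := by rw [happend]
    _ ≤ ((L.take i).drop h).sum := wrapLen_append_le_sum hblock (by linarith)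
    _ = pSum L i - pSum L h := eq_sub_of_add_eq' hsum

theorem exists_mem_cutIndices_wrapLen_take_eq_sub (hL : ∀ l ∈ L, 0 ≤ l) (hne : L.take i ≠ []) :
    ∃ h ∈ cutIndices L i, wrapLen (L.take i) = pSum L i - pSum L h := by
  obtain ⟨A, B, hAB, hB, hle, heq⟩ :=
    exists_append_wrapLen_eq_sum (fun l hl ↦ hL l (List.mem_of_mem_take hl)) hne
  obtain ⟨hprefix, -⟩ := List.prefix_take_iff.1 (hAB ▸ List.prefix_append A B)
  have hA : L.take A.length = A := (List.prefix_iff_eq_take.1 hprefix).symm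
  have hlt : A.length < i := by
    have hlen := congrArg List.length hAB
    have hBpos := List.length_pos_iff.2 hB
    rw [List.length_append, List.length_take] at hlen
    omega
  have hsum : pSum L A.length + B.sum = pSum L i := by
    rw [pSum, pSum, hA, ← hAB, List.sum_append]
  refine ⟨A.length, ⟨hlt, ?_⟩, ?_⟩
  · rw [hA]
    linarith
  · linarith

theorem wrapLen_take_eq_sub_of_isGreatest (hL : ∀ l ∈ L, 0 ≤ l) (hi : i ≤ L.length)
    (hh : IsGreatest (cutIndices L i) h) : wrapLen (L.take i) = pSum L i - pSum L h := by
  have hne : L.take i ≠ [] := by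
    have := hh.1.1
    rw [← List.length_pos_iff, List.length_take_of_le hi]
    omega
  obtain ⟨j, hj, hji⟩ := exists_mem_cutIndices_wrapLen_take_eq_sub hL hne
  refine (wrapLen_take_le_sub hi hh.1).antisymm ?_
  rw [hji]
  exact sub_le_sub_left (pSum_mono hL (hh.2 hj)) _

theorem exists_isGreatest_cutIndices (hL : ∀ l ∈ L, 0 ≤ l) (hne : L.take i ≠ []) :
    ∃ h, IsGreatest (cutIndices L i) h := by
  obtain ⟨j, hj, -⟩ := exists_mem_cutIndices_wrapLen_take_eq_sub hL hne
  exact BddAbove.exists_isGreatest_of_nonempty ⟨i, fun _ hk ↦ hk.1.le⟩ ⟨j, hj⟩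

end CutIndices

/-- Observation 1: For every `1 ≤ i ≤ n`, the wrapping length `y_i`
equals `x_i − x_h`, where `h` is the largest index with `0 ≤ h < i` and
`x_h + y_h ≤ x_i`. -/
theorem stmt_3 (L : List ℝ) (hL : ∀ l ∈ L, 0 < l) (i : ℕ) (hi1 : 1 ≤ i)
    (hin : i ≤ L.length) :
    ∃ h, h < i ∧ pSum L h + wrapLen (L.take h) ≤ pSum L i ∧
      (∀ h', h' < i → pSum L h' + wrapLen (L.take h') ≤ pSum L i → h' ≤ h) ∧
      wrapLen (L.take i) = pSum L i - pSum L h := by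
  have hL' : ∀ l ∈ L, 0 ≤ l := fun l hl ↦ (hL l hl).le
  have hne : L.take i ≠ [] := by
    rwa [← List.length_pos_iff, List.length_take_of_le hin]
  obtain ⟨h, hh⟩ := exists_isGreatest_cutIndices hL' hne
  exact ⟨h, hh.1.1, hh.1.2, fun h' hlt hle ↦ hh.2 ⟨hlt, hle⟩,
    wrapLen_take_eq_sub_of_isGreatest hL' hin hh⟩
end

section
/- The greedy algorithm has unbounded approximation ratio: for every constant C > 0 there exists a nonempty finite sequence L of positive integers such that the total of the last block of the greedy partition G(L) is strictly greater than C times y_n, the minimum last-block total over all valid partitions of L. -/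
open Classical in
/-- The greedy ("fold whenever possible") partition of `L`, where `t` is the total
of the previously formed block (initially `t = 0`): the next block is the shortest
nonempty prefix of the remaining elements whose total is at least `t`, or all of
the remaining elements if no such prefix exists. `G(L) = greedy 0 L`. -/
noncomputable def greedy (t : ℝ) (L : List ℝ) : List (List ℝ) :=
  if L.length = 0 then []
  else if h : ∃ m, 1 ≤ m ∧ m ≤ L.length ∧ t ≤ (L.take m).sum then
    (L.take (Nat.find h)) :: greedy (L.take (Nat.find h)).sum (L.drop (Nat.find h))
  else [L]
termination_by L.length
decreasing_by
  have h1 := (Nat.find_spec h).1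
  simp only [List.length_drop]
  omega

/-!
Concatenate stages, the `j`-th one having the two cuttings

* `[3, …, 3, 2], [1, 3, …, 3, 2], [1, 3, …, 3, 3]`, with `j`, `j` and `j` (plus the last) threes;
* `[3], …, [3], [2, 1], [3], …, [3], [2, 1], [3], …, [3]`, all of whose blocks have total `3`.

The first cutting is the greedy one: after a block of total `3 * j + 1` the threes alone fall
short, and the terminating element brings the totals to `3 * j + 2`, `3 * j + 3` and
`3 * j + 4 = 3 * (j + 1) + 1`, ready for stage `j + 1`; stage `0` has no initial threes, so it can
follow the total `0`. The greedy totals thus grow linearly with the number of stages, while the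
second cutting keeps the wrapping length at most `3`.
-/

section LastTotal

theorem lastTotal_concat (P : List (List ℝ)) (B : List ℝ) : lastTotal (P ++ [B]) = B.sum := by
  simp [lastTotal]

theorem exists_isSuffix_flatten_sum_eq_lastTotal (P : List (List ℝ)) :
    ∃ S, S <:+ P.flatten ∧ S.sum = lastTotal P := by
  rcases P.eq_nil_or_concat' with rfl | ⟨Q, B, rfl⟩
  · exact ⟨[], List.nil_suffix, by simp [lastTotal]⟩
  · exact ⟨B, by simp, (lastTotal_concat Q B).symm⟩

theorem lastTotal_eq_of_forall_sum_eq {P : List (List ℝ)} {c : ℝ} (hP : P ≠ [])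
    (hsum : ∀ B ∈ P, B.sum = c) : lastTotal P = c := by
  obtain ⟨Q, B, rfl⟩ := P.eq_nil_or_concat'.resolve_left hP
  rw [lastTotal_concat]
  exact hsum B (by simp)

end LastTotal

section WrapLen

theorem finite_setOf_lastTotal (L : List ℝ) :
    {t | ∃ P, ValidPartition L P ∧ lastTotal P = t}.Finite := by
  refine (L.tails.finite_toSet.image List.sum).subset ?_
  rintro _ ⟨P, ⟨rfl, -⟩, rfl⟩
  obtain ⟨S, hS, hsum⟩ := exists_isSuffix_flatten_sum_eq_lastTotal P
  exact ⟨S, (List.mem_tails S _).2 hS, hsum⟩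

theorem ValidPartition.wrapLen_le {L : List ℝ} {P : List (List ℝ)} (hP : ValidPartition L P) :
    wrapLen L ≤ lastTotal P :=
  csInf_le (finite_setOf_lastTotal L).bddBelow ⟨P, hP, rfl⟩

variable {P : List (List ℝ)} {c : ℝ}

theorem validPartition_flatten_of_forall_sum_eq (hne : ∀ B ∈ P, B ≠ [])
    (hsum : ∀ B ∈ P, B.sum = c) : ValidPartition P.flatten P := by
  refine ⟨rfl, hne, ?_⟩
  rw [List.map_eq_replicate_iff.2 hsum]
  exact List.isChain_replicate_of_rel _ le_rfl

theorem wrapLen_flatten_le_of_forall_sum_eq (hP : P ≠ []) (hne : ∀ B ∈ P, B ≠ [])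
    (hsum : ∀ B ∈ P, B.sum = c) : wrapLen P.flatten ≤ c :=
  (validPartition_flatten_of_forall_sum_eq hne hsum).wrapLen_le.trans_eq
    (lastTotal_eq_of_forall_sum_eq hP hsum)

end WrapLen

section Greedy

/-- `IsGreedyBlock t B` says that `B` is a complete greedy block after a block of total `t`: it is
nonempty, its total is at least `t`, and no shorter nonempty prefix of it has total at least `t`. -/
structure IsGreedyBlock (t : ℝ) (B : List ℝ) : Prop where
  ne_nil : B ≠ []
  le_sum : t ≤ B.sum
  sum_take_lt : ∀ m, 1 ≤ m → m < B.length → (B.take m).sum < t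

variable {t : ℝ}

theorem IsGreedyBlock.greedy_append {B : List ℝ} (hB : IsGreedyBlock t B) (R : List ℝ) :
    greedy t (B ++ R) = B :: greedy B.sum R := by
  classical
  have hpos : 0 < B.length := List.length_pos_of_ne_nil hB.ne_nil
  have hfits : 1 ≤ B.length ∧ B.length ≤ (B ++ R).length ∧
      t ≤ ((B ++ R).take B.length).sum :=
    ⟨hpos, by simp, by simpa using hB.le_sum⟩
  have hexists : ∃ m, 1 ≤ m ∧ m ≤ (B ++ R).length ∧ t ≤ ((B ++ R).take m).sum := ⟨_, hfits⟩
  have hfind : Nat.find hexists = B.length := by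
    refine (Nat.find_eq_iff hexists).2 ⟨hfits, fun m hm ⟨hm_pos, _, hle⟩ ↦ ?_⟩
    rw [List.take_append_of_le_length hm.le] at hle
    exact (hB.sum_take_lt m hm_pos hm).not_ge hle
  rw [greedy, if_neg (by simp [hB.ne_nil]), dif_pos hexists]
  simp only [hfind, List.take_left', List.drop_left']

theorem isGreedyBlock_concat {A : List ℝ} {b : ℝ} (hA : ∀ a ∈ A, 0 ≤ a)
    (hlt : A ≠ [] → A.sum < t) (hle : t ≤ A.sum + b) : IsGreedyBlock t (A ++ [b]) where
  ne_nil := by simp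
  le_sum := by simpa using hle
  sum_take_lt m hm_pos hm := by
    have hm_le : m ≤ A.length := by simpa [Nat.lt_succ_iff] using hm
    rw [List.take_append_of_le_length hm_le]
    calc (A.take m).sum ≤ A.sum := (List.take_sublist m A).sum_le_sum hA
      _ < t := hlt (List.ne_nil_of_length_pos (by omega))

end Greedy

section Trap

/-- The greedy blocks of the `j`-th stage of the bad sequence. -/
def greedyBlocks (j : ℕ) : List (List ℝ) :=
  [List.replicate j 3 ++ [2], 1 :: List.replicate j 3 ++ [2], 1 :: List.replicate j 3 ++ [3]]

/-- The `j`-th stage of the bad sequence, cut into blocks of total `3`. -/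
def evenBlocks (j : ℕ) : List (List ℝ) :=
  List.replicate j [3] ++ [2, 1] :: List.replicate j [3] ++ [2, 1] :: List.replicate j [3] ++ [[3]]

/-- The bad sequence with stages `0, …, n - 1`. -/
def trap (n : ℕ) : List ℝ := ((List.range n).flatMap greedyBlocks).flatten

theorem flatten_evenBlocks (j : ℕ) : (evenBlocks j).flatten = (greedyBlocks j).flatten := by
  simp [evenBlocks, greedyBlocks]

theorem flatten_flatMap_evenBlocks (n : ℕ) :
    ((List.range n).flatMap evenBlocks).flatten = trap n := by
  simp only [trap, List.flatten_eq_flatMap, List.flatMap_assoc]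
  simp only [← List.flatten_eq_flatMap, flatten_evenBlocks]

theorem eq_of_mem_evenBlocks {j : ℕ} {B : List ℝ} (hB : B ∈ evenBlocks j) :
    B = [3] ∨ B = [2, 1] := by
  simp only [evenBlocks, List.mem_append, List.mem_cons, List.mem_replicate] at hB
  tauto

theorem wrapLen_trap_le {n : ℕ} (hn : n ≠ 0) : wrapLen (trap n) ≤ 3 := by
  have heq : ∀ B ∈ (List.range n).flatMap evenBlocks, B = [3] ∨ B = [2, 1] := fun B hB ↦
    let ⟨_, _, hB⟩ := List.mem_flatMap.1 hB
    eq_of_mem_evenBlocks hB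
  rw [← flatten_flatMap_evenBlocks]
  refine wrapLen_flatten_le_of_forall_sum_eq ?_ (fun B hB ↦ ?_) (fun B hB ↦ ?_)
  · simpa [evenBlocks] using ⟨0, hn.bot_lt⟩
  · rcases heq B hB with rfl | rfl <;> simp
  · rcases heq B hB with rfl | rfl <;> norm_num

theorem exists_pos_natCast_eq_of_mem_trap {n : ℕ} {l : ℝ} (hl : l ∈ trap n) :
    ∃ k : ℕ, 0 < k ∧ l = k := by
  rw [← flatten_flatMap_evenBlocks] at hl
  obtain ⟨B, hB, hl⟩ := List.mem_flatten.1 hl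
  obtain ⟨j, -, hB⟩ := List.mem_flatMap.1 hB
  have hcases : l = 1 ∨ l = 2 ∨ l = 3 := by
    rcases eq_of_mem_evenBlocks hB with rfl | rfl <;>
      simp only [List.mem_cons, List.not_mem_nil, or_false] at hl <;> tauto
  rcases hcases with rfl | rfl | rfl
  exacts [⟨1, by norm_num⟩, ⟨2, by norm_num⟩, ⟨3, by norm_num⟩]

theorem sum_replicate_three_concat (j : ℕ) (b : ℝ) :
    (List.replicate j 3 ++ [b]).sum = 3 * j + b := by
  simp [mul_comm]

theorem sum_one_cons_replicate_three_concat (j : ℕ) (b : ℝ) :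
    (1 :: List.replicate j 3 ++ [b]).sum = 3 * j + (b + 1) := by
  rw [List.cons_append, List.sum_cons, sum_replicate_three_concat]
  ring

theorem isGreedyBlock_replicate_three_concat {j : ℕ} {t b : ℝ} (hlt : j ≠ 0 → 3 * (j : ℝ) < t)
    (hle : t ≤ 3 * j + b) : IsGreedyBlock t (List.replicate j 3 ++ [b]) :=
  isGreedyBlock_concat (by simp) (by simpa [mul_comm] using hlt) (by simpa [mul_comm] using hle)

theorem isGreedyBlock_one_cons_replicate_three_concat {j : ℕ} {t b : ℝ} (hlt : 3 * j + 1 < t)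
    (hle : t ≤ 3 * j + (b + 1)) : IsGreedyBlock t (1 :: List.replicate j 3 ++ [b]) := by
  have hsum : (1 :: List.replicate j (3 : ℝ)).sum = 3 * j + 1 := by simp [mul_comm, add_comm]
  exact isGreedyBlock_concat (by simp) (fun _ ↦ by linarith) (by linarith)

theorem greedy_flatten_greedyBlocks_append {j : ℕ} {t : ℝ} (hlt : j ≠ 0 → 3 * (j : ℝ) < t)
    (hle : t ≤ 3 * j + 2) (R : List ℝ) :
    greedy t ((greedyBlocks j).flatten ++ R) =
      greedyBlocks j ++ greedy (3 * j + 4) R := by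
  have hfirst : IsGreedyBlock t (List.replicate j 3 ++ [2]) :=
    isGreedyBlock_replicate_three_concat hlt hle
  have hsecond : IsGreedyBlock (3 * j + 2) (1 :: List.replicate j 3 ++ [2]) :=
    isGreedyBlock_one_cons_replicate_three_concat (by linarith) (by linarith)
  have hthird : IsGreedyBlock (3 * j + (2 + 1)) (1 :: List.replicate j 3 ++ [3]) :=
    isGreedyBlock_one_cons_replicate_three_concat (by linarith) (by linarith)
  have hflatten : (greedyBlocks j).flatten ++ R = (List.replicate j 3 ++ [2]) ++
      ((1 :: List.replicate j 3 ++ [2]) ++ ((1 :: List.replicate j 3 ++ [3]) ++ R)) := by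
    simp [greedyBlocks]
  rw [hflatten, hfirst.greedy_append, sum_replicate_three_concat, hsecond.greedy_append,
    sum_one_cons_replicate_three_concat, hthird.greedy_append, sum_one_cons_replicate_three_concat]
  norm_num [greedyBlocks]

theorem greedy_flatten_flatMap_greedyBlocks (n : ℕ) {j : ℕ} {t : ℝ}
    (hlt : j ≠ 0 → 3 * (j : ℝ) < t) (hle : t ≤ 3 * j + 2) :
    greedy t ((List.range' j n).flatMap greedyBlocks).flatten =
      (List.range' j n).flatMap greedyBlocks := by
  induction n generalizing j t with
  | zero => simp [greedy]
  | succ n ih =>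
    rw [List.range'_succ, List.flatMap_cons, List.flatten_append,
      greedy_flatten_greedyBlocks_append hlt hle,
      ih (fun _ ↦ by push_cast; linarith) (by push_cast; linarith)]

theorem lastTotal_greedy_trap (n : ℕ) : lastTotal (greedy 0 (trap (n + 1))) = 3 * n + 4 := by
  have hgreedy : greedy 0 (trap (n + 1)) = (List.range (n + 1)).flatMap greedyBlocks := by
    rw [trap, List.range_eq_range']
    exact greedy_flatten_flatMap_greedyBlocks _ (by simp) (by norm_num)
  have hconcat : (List.range (n + 1)).flatMap greedyBlocks =
      ((List.range n).flatMap greedyBlocks ++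
        [List.replicate n 3 ++ [2], 1 :: List.replicate n 3 ++ [2]]) ++
        [1 :: List.replicate n 3 ++ [3]] := by
    simp [List.range_succ, greedyBlocks]
  rw [hgreedy, hconcat, lastTotal_concat, sum_one_cons_replicate_three_concat]
  norm_num

end Trap

/-- The greedy algorithm has unbounded approximation ratio: for
every constant `C > 0` there is a nonempty finite sequence `L` of positive
integers such that the total of the last block of the greedy partition `G(L)` is
strictly greater than `C` times `y_n`, the minimum last-block total over all
valid partitions of `L`. -/
theorem stmt_13 (C : ℝ) (hC : 0 < C) :
    ∃ L : List ℝ, L ≠ [] ∧ (∀ l ∈ L, ∃ k : ℕ, 0 < k ∧ l = (k : ℝ)) ∧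
      C * wrapLen L < lastTotal (greedy 0 L) := by
  obtain ⟨n, hn⟩ := exists_nat_gt C
  refine ⟨trap (n + 1), by simp [trap, greedyBlocks, List.range_succ],
    fun l ↦ exists_pos_natCast_eq_of_mem_trap, ?_⟩
  calc C * wrapLen (trap (n + 1)) ≤ C * 3 := by gcongr; exact wrapLen_trap_le n.succ_ne_zero
    _ < 3 * n + 4 := by linarith
    _ = lastTotal (greedy 0 (trap (n + 1))) := (lastTotal_greedy_trap n).symm
end
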